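/- There exists an amenable subset M₀ ⊆ C, with S_η \ M₀ having at most one element for every η, such that there is no E-preserving bijection from M₀ onto C; that is, M₀ and C are non-isomorphic as structures with the relations (E_i)_{i∈ℕ}. -/

import Mathlib

/-- `D_η = {σ : ℕ → Bool | ∀ n, σ (2n) = η n}` in Cantor space. -/
def DsetB (η : ℕ → Bool) : Set (ℕ → Bool) := {σ | ∀ n, σ (2 * n) = η n}

/-- `b_η` is the element of `D_η` with `b_η (2n) = η n` and `b_η (2n+1) = 1`. -/
def bfun (η : ℕ → Bool) : ℕ → Bool := fun n => if n % 2 = 0 then η (n / 2) else true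

/-- `S_η`: elements of `D_η` with `σ (2n+1) = 0` for all but finitely many `n`,
together with the extra point `b_η`. -/
def SsetB (η : ℕ → Bool) : Set (ℕ → Bool) :=
  {σ | σ ∈ DsetB η ∧ {n | σ (2 * n + 1) ≠ false}.Finite} ∪ {bfun η}

/-- `C = ⋃_η S_η`. -/
def CsetB : Set (ℕ → Bool) := ⋃ η : ℕ → Bool, SsetB η

/-- `E_i (σ, τ)` holds iff `σ` and `τ` agree below `i`. -/
def Erel (i : ℕ) (σ τ : ℕ → Bool) : Prop := ∀ k < i, σ k = τ k

/-- A set `M ⊆ C` is amenable if whenever some element of `S_η` agrees with a finite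
sequence `s` on all indices below `n`, some element of `M ∩ S_η` does as well. -/
def AmenableB (M : Set (ℕ → Bool)) : Prop :=
  ∀ (η : ℕ → Bool) (n : ℕ) (s : Fin n → Bool),
    (∃ ν ∈ SsetB η, ∀ k : Fin n, ν k = s k) →
    ∃ ν ∈ M ∩ SsetB η, ∀ k : Fin n, ν k = s k

/-!
We diagonalize. An `E`-preserving map `f` on `M` is determined by how finite words are sent to
letters, so it extends to a map `g` of the whole space coded by a point `η`. From `S η` we delete a
single point `x η`, chosen so that the map coded by `η` sends `x η` into `C` whenever it sends any
point of `S η` there. If `f` were an isomorphism of the remaining set `M` onto `C`, then `g (x η)`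
would lie in `C = f '' M`; since `x η` is a limit of points of `M` and `f` reflects agreement of
initial segments, its `f`-preimage could only be `x η` itself, which is not in `M`.
-/

section Coding

open PiNat

variable {α β : Type*} [Encodable α]

/-- The map of sequence spaces coded by `η`: the value of the image of `σ` at `n` is read off `η` at
the number of the word `σ 0, …, σ n`, so that it depends only on that word. -/
def codedMap (η : ℕ → β) (σ : ℕ → α) : ℕ → β :=
  fun n => η (Encodable.encode (res σ (n + 1)))

theorem codedMap_mem_cylinder (η : ℕ → β) {σ τ : ℕ → α} {n : ℕ} (h : σ ∈ cylinder τ n) :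
    codedMap η σ ∈ cylinder (codedMap η τ) n := by
  intro k hk
  have hres : res σ (k + 1) = res τ (k + 1) := res_eq_res.2 fun j hj => h j (by lia)
  simp only [codedMap, hres]

theorem exists_eqOn_codedMap [Nonempty β] {M : Set (ℕ → α)} {f : (ℕ → α) → ℕ → β}
    (hf : ∀ σ ∈ M, ∀ τ ∈ M, ∀ n, σ ∈ cylinder τ n → f σ ∈ cylinder (f τ) n) :
    ∃ η : ℕ → β, Set.EqOn (codedMap η) f M := by
  let word : M × ℕ → ℕ := fun p => Encodable.encode (res p.1.1 (p.2 + 1))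
  let letter : M × ℕ → β := fun p => f p.1 p.2
  have hfactor : letter.FactorsThrough word := by
    rintro ⟨⟨σ, hσ⟩, m⟩ ⟨⟨τ, hτ⟩, n⟩ h
    have hres : res σ (m + 1) = res τ (n + 1) := Encodable.encode_injective h
    obtain rfl : m = n := by simpa using congrArg List.length hres
    exact hf σ hσ τ hτ (m + 1) (fun _ hk => res_eq_res.1 hres hk) m m.lt_succ_self
  let fallback : ℕ → β := fun _ => Classical.arbitrary β
  exact ⟨Function.extend word letter fallback, fun σ hσ => funext fun n =>
    hfactor.extend_apply fallback (⟨σ, hσ⟩, n)⟩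

end Coding

section Diagonal

open PiNat Set Function

variable {ι X Y α β : Type*}

theorem mem_of_apply_mem_image {M : Set (ℕ → α)} {g : (ℕ → α) → ℕ → β}
    (hgM : ∀ σ ∈ M, ∀ τ ∈ M, ∀ n, g σ ∈ cylinder (g τ) n → σ ∈ cylinder τ n) {x : ℕ → α}
    (hg : ∀ σ n, σ ∈ cylinder x n → g σ ∈ cylinder (g x) n)
    (hx : ∀ n, (M ∩ cylinder x n).Nonempty) (hgx : g x ∈ g '' M) : x ∈ M := by
  obtain ⟨ρ, hρ, hρx⟩ := hgx
  suffices x = ρ from this ▸ hρ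
  funext k
  obtain ⟨ν, hν, hνx⟩ := hx (k + 1)
  have hνρ : ν ∈ cylinder ρ (k + 1) := hgM ν hν ρ hρ _ (hρx ▸ hg ν _ hνx)
  exact (hνx k k.lt_succ_self).symm.trans (hνρ k k.lt_succ_self)

theorem exists_mem_apply_mem_of_inter_preimage_nonempty {s : Set X} (hs : s.Nonempty)
    (g : X → Y) (t : Set Y) :
    ∃ x ∈ s, (s ∩ g ⁻¹' t).Nonempty → g x ∈ t := by
  by_cases h : (s ∩ g ⁻¹' t).Nonempty
  · obtain ⟨x, hxs, hxt⟩ := h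
    exact ⟨x, hxs, fun _ => hxt⟩
  · obtain ⟨x, hxs⟩ := hs
    exact ⟨x, hxs, fun h' => absurd h' h⟩

theorem iUnion_sdiff_range_inter {S : ι → Set X} (hS : Pairwise (Disjoint on S)) {x : ι → X}
    (hx : ∀ i, x i ∈ S i) (i : ι) : ((⋃ j, S j) \ range x) ∩ S i = S i \ {x i} := by
  ext y
  constructor
  · rintro ⟨⟨-, hy⟩, hyi⟩
    exact ⟨hyi, fun h => hy ⟨i, h.symm⟩⟩
  · rintro ⟨hyi, hne⟩
    refine ⟨⟨mem_iUnion_of_mem i hyi, ?_⟩, hyi⟩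
    rintro ⟨j, rfl⟩
    obtain rfl : j = i := hS.eq (not_disjoint_iff.2 ⟨x j, hx j, hyi⟩)
    exact hne rfl

theorem exists_amenable_not_isomorphic_general [Countable α] [Nonempty α]
    {S : (ℕ → α) → Set (ℕ → α)} (hdisj : Pairwise (Disjoint on S)) (hne : ∀ η, (S η).Nonempty)
    (hS : ∀ η, ∀ ν ∈ S η, ∀ n, (S η ∩ cylinder ν n).Nontrivial) :
    ∃ M ⊆ ⋃ η, S η, (∀ η, (S η \ M).Subsingleton) ∧
      (∀ η, ∀ ν ∈ S η, ∀ n, (M ∩ S η ∩ cylinder ν n).Nonempty) ∧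
      ∀ f : (ℕ → α) → ℕ → α,
        (∀ σ ∈ M, ∀ τ ∈ M, ∀ n, σ ∈ cylinder τ n ↔ f σ ∈ cylinder (f τ) n) →
        f '' M ≠ ⋃ η, S η := by
  have := Encodable.ofCountable α
  choose x hxS hxC using fun η =>
    exists_mem_apply_mem_of_inter_preimage_nonempty (hne η) (codedMap η) (⋃ ζ, S ζ)
  set M := (⋃ η, S η) \ range x
  have hMS : ∀ η, M ∩ S η = S η \ {x η} := iUnion_sdiff_range_inter hdisj hxS
  have hdense : ∀ η, ∀ ν ∈ S η, ∀ n, (M ∩ S η ∩ cylinder ν n).Nonempty := by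
    intro η ν hν n
    obtain ⟨ν', ⟨hν'S, hν'ν⟩, hν'x⟩ := (hS η ν hν n).exists_ne (x η)
    exact ⟨ν', (hMS η).symm ▸ ⟨hν'S, hν'x⟩, hν'ν⟩
  refine ⟨M, sdiff_subset, fun η => ?_, hdense, fun f hf hfM => ?_⟩
  · refine subsingleton_singleton.anti (t := {x η}) fun σ hσ => ?_
    by_contra hσx
    exact hσ.2 ((hMS η).ge ⟨hσ.1, hσx⟩).1
  · obtain ⟨η, hη⟩ := exists_eqOn_codedMap fun σ hσ τ hτ n => (hf σ hσ τ hτ n).1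
    have hlimit : ∀ n, (M ∩ cylinder (x η) n).Nonempty := fun n =>
      (hdense η (x η) (hxS η) n).mono fun _ h => ⟨h.1.1, h.2⟩
    have himage : codedMap η '' M = ⋃ ζ, S ζ := hη.image_eq.trans hfM
    have hreflect : ∀ σ ∈ M, ∀ τ ∈ M, ∀ n,
        codedMap η σ ∈ cylinder (codedMap η τ) n → σ ∈ cylinder τ n := by
      intro σ hσ τ hτ n h
      rw [hη hσ, hη hτ] at h
      exact (hf σ hσ τ hτ n).2 h
    have hxη : codedMap η (x η) ∈ ⋃ ζ, S ζ := by
      obtain ⟨y, ⟨hyM, hyS⟩, -⟩ := hdense η (x η) (hxS η) 0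
      exact hxC η ⟨y, hyS, himage.le (mem_image_of_mem _ hyM)⟩
    have hxM : x η ∈ M := mem_of_apply_mem_image hreflect
      (fun _ _ => codedMap_mem_cylinder η) hlimit (himage.ge hxη)
    exact hxM.2 (mem_range_self η)

end Diagonal

section Cantor

open PiNat Set Function

variable {η ν : ℕ → Bool}

theorem bfun_mem_DsetB (η : ℕ → Bool) : bfun η ∈ DsetB η := by
  intro n
  simp [bfun]

theorem SsetB_subset_DsetB (η : ℕ → Bool) : SsetB η ⊆ DsetB η :=
  union_subset (fun _ hσ => hσ.1) (singleton_subset_iff.2 (bfun_mem_DsetB η))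

theorem SsetB_nonempty (η : ℕ → Bool) : (SsetB η).Nonempty :=
  ⟨bfun η, Or.inr rfl⟩

theorem pairwise_disjoint_SsetB : Pairwise (Disjoint on SsetB) := by
  intro η ζ hne
  refine disjoint_left.2 fun σ hση hσζ => hne (funext fun n => ?_)
  exact (SsetB_subset_DsetB η hση n).symm.trans (SsetB_subset_DsetB ζ hσζ n)

/-- The sequence with the terms of `ν` below `n` and at even places, and those of `τ` at the
remaining odd places. It perturbs `ν ∈ D_η` within `D_η` and within its `n`-th cylinder. -/
def spliceOdd (ν : ℕ → Bool) (n : ℕ) (τ : ℕ → Bool) : ℕ → Bool :=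
  fun k => if k < n ∨ Even k then ν k else τ k

theorem spliceOdd_mem_cylinder (ν : ℕ → Bool) (n : ℕ) (τ : ℕ → Bool) :
    spliceOdd ν n τ ∈ cylinder ν n :=
  fun _ hk => if_pos (Or.inl hk)

theorem spliceOdd_apply_odd (ν τ : ℕ → Bool) {n m : ℕ} (h : n ≤ 2 * m + 1) :
    spliceOdd ν n τ (2 * m + 1) = τ (2 * m + 1) :=
  if_neg (by simp [h])

theorem spliceOdd_mem_SsetB (hν : ν ∈ DsetB η) (n : ℕ) {τ : ℕ → Bool}
    (hτ : {m | τ (2 * m + 1) ≠ false}.Finite) : spliceOdd ν n τ ∈ SsetB η := by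
  refine Or.inl ⟨fun m => (if_pos (Or.inr (even_two_mul m))).trans (hν m), ?_⟩
  refine ((finite_lt_nat n).union hτ).subset fun m hm => or_iff_not_imp_left.2 fun hmn => ?_
  rwa [mem_ofPred_eq, spliceOdd_apply_odd ν τ (by grind)] at hm

theorem SsetB_inter_cylinder_nontrivial (hν : ν ∈ DsetB η) (n : ℕ) :
    (SsetB η ∩ cylinder ν n).Nontrivial := by
  refine ⟨spliceOdd ν n fun _ => false, ⟨spliceOdd_mem_SsetB hν n (by simp),
      spliceOdd_mem_cylinder ν n _⟩,
    spliceOdd ν n fun k => decide (k = 2 * n + 1), ⟨spliceOdd_mem_SsetB hν n (by simp),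
      spliceOdd_mem_cylinder ν n _⟩, fun h => ?_⟩
  have happly := congrFun h (2 * n + 1)
  rw [spliceOdd_apply_odd _ _ (by lia), spliceOdd_apply_odd _ _ (by lia)] at happly
  simp at happly

theorem amenableB_iff_forall_inter_cylinder_nonempty {M : Set (ℕ → Bool)} :
    AmenableB M ↔ ∀ η, ∀ ν ∈ SsetB η, ∀ n, (M ∩ SsetB η ∩ cylinder ν n).Nonempty := by
  constructor
  · intro hM η ν hν n
    obtain ⟨ν', hν', hagree⟩ := hM η n (fun k => ν k) ⟨ν, hν, fun _ => rfl⟩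
    exact ⟨ν', hν', fun k hk => hagree ⟨k, hk⟩⟩
  · rintro hM η n s ⟨ν, hν, hs⟩
    obtain ⟨ν', hν', hagree⟩ := hM η ν hν n
    exact ⟨ν', hν', fun k => (hagree k k.2).trans (hs k)⟩

end Cantor

/-- There is an amenable `M₀ ⊆ C`, missing at most one point of each `S_η`, that is
not isomorphic to `C` as a structure with the relations `E_i`: no `E`-preserving
bijection maps `M₀` onto `C`. -/
theorem exists_amenable_not_isomorphic :
    ∃ M₀ : Set (ℕ → Bool), M₀ ⊆ CsetB ∧
      (∀ η : ℕ → Bool, (SsetB η \ M₀).Subsingleton) ∧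
      AmenableB M₀ ∧
      ¬ ∃ f : (ℕ → Bool) → (ℕ → Bool), Set.BijOn f M₀ CsetB ∧
          ∀ σ ∈ M₀, ∀ τ ∈ M₀, ∀ i : ℕ, Erel i σ τ ↔ Erel i (f σ) (f τ) := by
  obtain ⟨M₀, hsub, hdiff, hdense, hiso⟩ :=
    exists_amenable_not_isomorphic_general pairwise_disjoint_SsetB SsetB_nonempty
      fun η _ hν => SsetB_inter_cylinder_nontrivial (SsetB_subset_DsetB η hν)
  exact ⟨M₀, hsub, hdiff, amenableB_iff_forall_inter_cylinder_nonempty.2 hdense,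
    fun ⟨f, hbij, hf⟩ => hiso f hf hbij.image_eq⟩
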